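/- The Maximin social choice correspondence is k-augmentation strategyproof for every k ≥ (m−2)n/(m−1) + 2; consequently its manipulation potential satisfies Φ(Maximin) ≤ (m−2)n/(m−1) + 2. -/

import Mathlib

open Finset

/-- A strict linear preference order over `m` candidates, encoded as the permutation sending
each candidate to its rank; rank `0` is the most preferred position, so
`c ≻ c'` iff `p c < p c'`. -/
abbrev Pref (m : ℕ) := Equiv.Perm (Fin m)

/-- A profile of `N` voters, each with a strict preference over `m` candidates. -/
abbrev Profile (m N : ℕ) := Fin N → Pref m

/-- A social choice correspondence: for each number `N` of voters, it maps each `N`-voter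
profile to a set of (tied) winners. -/
abbrev SCC (m : ℕ) := (N : ℕ) → Profile m N → Finset (Fin m)

/-- The profile `P` with `k` extra copies of voter `i`'s preference appended. -/
def addCopies {m n : ℕ} (P : Profile m n) (i : Fin n) (k : ℕ) : Profile m (n + k) :=
  fun j => if h : (j : ℕ) < n then P ⟨j, h⟩ else P i

/-- Break a tie among the candidates in `A` using the linear tie-breaking order `τ`:
the winner is the `τ`-maximal (lowest `τ`-rank) element of `A`. -/
noncomputable def tiebreak {m : ℕ} [NeZero m] (τ : Pref m) (A : Finset (Fin m)) : Fin m :=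
  if h : A.Nonempty then τ.symm ((A.image (fun c => τ c)).min' (h.image _)) else 0

/-- `F` is `k`-augmentation strategyproof on `n`-voter profiles: for every tie-breaker `τ`,
profile `P`, voter `i`, and alternative preference `q`, voter `i` weakly prefers the outcome
obtained by adding `k` truthful copies of her vote to the outcome of the manipulation `q`. -/
def kASP (m n : ℕ) [NeZero m] (F : SCC m) (k : ℕ) : Prop :=
  ∀ (τ : Pref m) (P : Profile m n) (i : Fin n) (q : Pref m),
    (P i) (tiebreak τ (F (n + k) (addCopies P i k))) ≤
      (P i) (tiebreak τ (F n (Function.update P i q)))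

/-- The manipulation potential of `F` on `n`-voter profiles: the least `k` such that `F` is
`k'`-augmentation strategyproof for all `k' ≥ k`, and `⊤` (i.e. `∞`) if no such `k` exists. -/
noncomputable def manipPot (m n : ℕ) [NeZero m] (F : SCC m) : ℕ∞ :=
  sInf ((fun k : ℕ => (k : ℕ∞)) '' {k : ℕ | ∀ k' : ℕ, k ≤ k' → kASP m n F k'})

/-- The margin of `c` against `d`: the number of voters preferring `c` to `d` minus the
number of voters preferring `d` to `c`. -/
def margin {m N : ℕ} (P : Profile m N) (c d : Fin m) : ℤ :=
  ((Finset.univ.filter (fun i => P i c < P i d)).card : ℤ) -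
    ((Finset.univ.filter (fun i => P i d < P i c)).card : ℤ)

/-- Maximin score: the worst margin of `c` against any other candidate. -/
def maximinScore {m N : ℕ} (P : Profile m N) (c : Fin m) : ℤ :=
  if h : (Finset.univ.erase c).Nonempty then
    (Finset.univ.erase c).inf' h (fun d => margin P c d)
  else 0

/-- Maximin: the winners are the candidates with maximal maximin score. -/
def maximin (m : ℕ) : SCC m := fun _ P =>
  Finset.univ.filter (fun c => ∀ c', maximinScore P c' ≤ maximinScore P c)


def cnt {m N : ℕ} (P : Profile m N) (c d : Fin m) : ℕ :=
  (Finset.univ.filter (fun i => P i c < P i d)).card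

lemma cnt_add {m N : ℕ} (P : Profile m N) {c d : Fin m} (h : c ≠ d) :
    cnt P c d + cnt P d c = N := by
  have h1 := Finset.card_filter_add_card_filter_not (s := (Finset.univ : Finset (Fin N)))
    (fun i => P i c < P i d)
  have h2 : (Finset.univ.filter (fun i => ¬ P i c < P i d)) =
      Finset.univ.filter (fun i => P i d < P i c) := by
    ext i
    have : P i c ≠ P i d := fun e => h ((P i).injective e)
    simp only [Finset.mem_filter, Finset.mem_univ, true_and, not_lt]
    exact ⟨fun hh => lt_of_le_of_ne hh this.symm, le_of_lt⟩
  rw [h2] at h1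
  simpa [cnt] using h1

lemma margin_eq {m N : ℕ} (P : Profile m N) {c d : Fin m} (h : c ≠ d) :
    margin P c d = 2 * (cnt P c d : ℤ) - N := by
  have := cnt_add P h
  have h2 : margin P c d = (cnt P c d : ℤ) - cnt P d c := rfl
  omega

lemma score_le {m N : ℕ} (P : Profile m N) {c d : Fin m} (h : c ≠ d) :
    maximinScore P c ≤ margin P c d := by
  have hd : d ∈ Finset.univ.erase c := by simp [h.symm]
  unfold maximinScore
  rw [dif_pos ⟨d, hd⟩]
  exact Finset.inf'_le _ hd

lemma exists_score {m N : ℕ} (hm : 3 ≤ m) (P : Profile m N) (c : Fin m) :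
    ∃ d, c ≠ d ∧ maximinScore P c = margin P c d := by
  have hne : (Finset.univ.erase c).Nonempty := by
    rw [← Finset.card_pos, Finset.card_erase_of_mem (Finset.mem_univ _)]
    simp; omega
  unfold maximinScore
  rw [dif_pos hne]
  obtain ⟨d, hd, he⟩ := Finset.exists_mem_eq_inf' hne (fun d => margin P c d)
  exact ⟨d, fun e => by simp [e] at hd, he⟩

lemma tiebreak_mem {m : ℕ} [NeZero m] (τ : Pref m) (A : Finset (Fin m)) (h : A.Nonempty) :
    tiebreak τ A ∈ A := by
  unfold tiebreak
  rw [dif_pos h]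
  have := Finset.min'_mem (A.image (fun c => τ c)) (h.image _)
  obtain ⟨x, hx, he⟩ := Finset.mem_image.1 this
  rw [← he]
  simpa using hx

lemma tiebreak_maximin {m N : ℕ} [NeZero m] (τ : Pref m) (P : Profile m N) (c : Fin m) :
    maximinScore P c ≤ maximinScore P (tiebreak τ (maximin m N P)) := by
  have hne : (maximin m N P).Nonempty := by
    obtain ⟨x, -, hx⟩ := Finset.exists_max_image (Finset.univ : Finset (Fin m))
      (maximinScore P) ⟨0, Finset.mem_univ _⟩
    exact ⟨x, by simp only [maximin, Finset.mem_filter, Finset.mem_univ, true_and]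
                 exact fun c => hx c (Finset.mem_univ _)⟩
  have := tiebreak_mem τ _ hne
  simp only [maximin, Finset.mem_filter, Finset.mem_univ, true_and] at this
  exact this c

lemma cnt_addCopies {m n : ℕ} (P : Profile m n) (i : Fin n) (k : ℕ) (c d : Fin m) :
    cnt (addCopies P i k) c d = cnt P c d + if P i c < P i d then k else 0 := by
  unfold cnt
  simp only [Finset.card_filter]
  rw [Fin.sum_univ_add]
  congr 1
  · refine Finset.sum_congr rfl fun j _ => ?_
    simp [addCopies]
  · simp [addCopies]

lemma cnt_update {m n : ℕ} (P : Profile m n) (i : Fin n) (q : Pref m) (c d : Fin m) :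
    cnt P c d ≤ cnt (Function.update P i q) c d + 1 := by
  unfold cnt
  refine le_trans (Finset.card_le_card (t := insert i
    (Finset.univ.filter (fun j => Function.update P i q j c < Function.update P i q j d))) ?_)
    (Finset.card_insert_le _ _)
  intro j hj
  by_cases e : j = i
  · simp [e]
  · simpa [e, Function.update_of_ne e] using hj

lemma cnt_update_le {m n : ℕ} (P : Profile m n) (i : Fin n) (q : Pref m) {c d : Fin m}
    (h : P i c < P i d) :
    cnt (Function.update P i q) c d ≤ cnt P c d := by
  unfold cnt
  refine Finset.card_le_card ?_
  intro j hj
  by_cases e : j = i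
  · simp [e, h]
  · simpa [e, Function.update_of_ne e] using hj

lemma sum_cnt {m n : ℕ} [NeZero m] (P : Profile m n) (f : Fin m → Fin m) (hf : ∀ c, c ≠ f c) :
    n ≤ ∑ c, cnt P c (f c) := by
  unfold cnt
  simp only [Finset.card_filter]
  rw [Finset.sum_comm]
  calc n = ∑ j : Fin n, 1 := by simp
    _ ≤ _ := Finset.sum_le_sum fun j _ => ?_
  have h0 : P j ((P j).symm 0) < P j (f ((P j).symm 0)) := by
    have := hf ((P j).symm 0)
    have h2 : P j (f ((P j).symm 0)) ≠ 0 := fun e => this ((Equiv.symm_apply_eq _).2 e.symm)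
    simpa using Fin.pos_iff_ne_zero.2 h2
  refine le_trans (le_of_eq ?_) (Finset.single_le_sum (f := fun c =>
    if P j c < P j (f c) then 1 else 0) (fun _ _ => Nat.zero_le _)
    (Finset.mem_univ ((P j).symm 0)))
  rw [if_pos h0]

lemma core {m n k : ℕ} [NeZero m] (hm : 3 ≤ m)
    (hk : ((m : ℤ) - 2) * n + ((m : ℤ) - 1) < ((m : ℤ) - 1) * k) : kASP m n (maximin m) k := by
  intro τ P i q
  by_contra hcon
  rw [not_le] at hcon
  have hb := tiebreak_maximin τ (addCopies P i k)
  have ha := tiebreak_maximin τ (Function.update P i q)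
  generalize tiebreak τ (maximin m (n + k) (addCopies P i k)) = b at *
  generalize tiebreak τ (maximin m n (Function.update P i q)) = a at *
  have hab : a ≠ b := fun e => by simp [e] at hcon
  have e1 : ∀ c, ∃ d, c ≠ d ∧ cnt P c d ≤ cnt P a b + 1 := by
    intro c
    obtain ⟨d, hd, he⟩ := exists_score hm (Function.update P i q) c
    refine ⟨d, hd, ?_⟩
    have h1 := ha c
    have h2 := score_le (Function.update P i q) hab
    rw [he, margin_eq _ hd] at h1
    rw [margin_eq _ hab] at h2
    have h3 := cnt_update P i q c d
    have h4 := cnt_update_le P i q hcon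
    omega
  choose e he1 he2 using e1
  set t := (P i).symm 0 with ht
  obtain ⟨d, hd, hs⟩ := exists_score hm (addCopies P i k) t
  have h1 := hb t
  have h2 := score_le (addCopies P i k) hab.symm
  rw [hs, margin_eq _ hd, cnt_addCopies] at h1
  rw [margin_eq _ hab.symm, cnt_addCopies, if_neg (not_lt.2 hcon.le)] at h2
  have htd : P i t < P i d := by
    have h2 : P i d ≠ 0 := fun e => hd (by rw [ht, ← e]; simp)
    simpa [ht] using Fin.pos_iff_ne_zero.2 h2
  rw [if_pos htd] at h1
  have h3 := cnt_add P hab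
  have h4 := sum_cnt P (Function.update e t d) (by
    intro c
    by_cases ec : c = t
    · subst ec; simpa using hd
    · simpa [Function.update_of_ne ec] using he1 c)
  rw [← Finset.add_sum_erase _ _ (Finset.mem_univ t)] at h4
  have h5 : ∑ x ∈ Finset.univ.erase t, cnt P x (Function.update e t d x) ≤
      (m - 1) * (cnt P a b + 1) := by
    refine le_trans (Finset.sum_le_card_nsmul _ _ (cnt P a b + 1) ?_) ?_
    · intro x hx
      rw [Function.update_of_ne (Finset.ne_of_mem_erase hx)]
      exact he2 x
    · rw [Finset.card_erase_of_mem (Finset.mem_univ _)]; simp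
  simp only [Function.update_self] at h4
  obtain ⟨r, rfl⟩ : ∃ r, m = r + 2 := ⟨m - 2, by omega⟩
  have h6 : r + 2 - 1 = r + 1 := by omega
  rw [h6] at h5
  push_cast at hk
  have h7 : cnt P a b + k ≤ n := by omega
  have h8 : cnt P t d + k + cnt P a b ≤ n := by omega
  zify at h4 h5 h7 h8
  have h9 : (r : ℤ) * (cnt P a b + k) ≤ r * n := mul_le_mul_of_nonneg_left h7 (by positivity)
  linarith

/-- Maximin is `k`-augmentation strategyproof for every
`k ≥ (m−2)n/(m−1) + 2`; consequently `Φ(Maximin) ≤ (m−2)n/(m−1) + 2`. -/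
theorem maximin_kASP_of_le (m n : ℕ) [NeZero m] (hm : 3 ≤ m) (hn : 2 ≤ n) :
    (∀ k : ℕ, ((m : ℝ) - 2) * (n : ℝ) / ((m : ℝ) - 1) + 2 ≤ (k : ℝ) →
        kASP m n (maximin m) k) ∧
      manipPot m n (maximin m) ≤
        ((⌊((m : ℝ) - 2) * (n : ℝ) / ((m : ℝ) - 1) + 2⌋₊ : ℕ) : ℕ∞) := by
  have hm' : (0 : ℝ) < (m : ℝ) - 1 := by
    have : (3 : ℝ) ≤ m := by exact_mod_cast hm
    linarith
  have key : ∀ k : ℕ, ((m : ℝ) - 2) * (n : ℝ) / ((m : ℝ) - 1) + 1 < (k : ℝ) →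
      kASP m n (maximin m) k := by
    intro k hk
    apply core hm
    have h1 : ((m : ℝ) - 2) * (n : ℝ) / ((m : ℝ) - 1) < k - 1 := by linarith
    rw [div_lt_iff₀ hm'] at h1
    have h2 : ((m : ℝ) - 2) * n + ((m : ℝ) - 1) < ((m : ℝ) - 1) * k := by linarith
    exact_mod_cast h2
  refine ⟨fun k hk => key k (by linarith), ?_⟩
  refine sInf_le ⟨_, ?_, rfl⟩
  intro k' hk'
  apply key
  have h1 := Nat.lt_floor_add_one (((m : ℝ) - 2) * (n : ℝ) / ((m : ℝ) - 1) + 2)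
  have h2 : ((⌊((m : ℝ) - 2) * (n : ℝ) / ((m : ℝ) - 1) + 2⌋₊ : ℕ) : ℝ) ≤ k' := by
    exact_mod_cast hk'
  linarith
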